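/- arXiv:2009.12020 — 3 statements merged into one kernel-verified Lean document; each statement's English description precedes it below -/
import Mathlib

section
/- For every fixed integer ℓ ≥ 2 and every real ε > 0, there exists t₀ such that for all integers t ≥ t₀ the ℓ-color Ramsey number of K_t satisfies r(t;ℓ) > 2^{((3ℓ/8) − 1/4 − ε)·t}; that is, there exists a coloring of the edges of the complete graph on N = ⌈2^{((3ℓ/8) − 1/4 − ε)·t}⌉ vertices with ℓ colors containing no monochromatic clique of size t. -/
/-!
Join two vectors of `𝔽₂ ^ (2 * k)`, with `2 * k` just below `t`, when they are not orthogonal for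
the standard symplectic form. A clique with one vector removed is linearly independent, so this
graph has no `t`-clique. A pairwise orthogonal `t`-tuple spans a totally isotropic subspace, of
dimension at most `k`, so a random `t`-tuple is pairwise orthogonal with probability only about
`2 ^ (-3 * t ^ 2 / 8)`. Pull this graph back along a random map from the vertices to
`𝔽₂ ^ (2 * k)`, independently for each of `ℓ - 2` colors: the expected number of `t`-sets
containing no edge of these colors drops by that factor each time. When fewer than
`2 ^ (t.choose 2 - 1)` such sets are left, a random coloring of the remaining pairs with the last
two colors makes none of them monochromatic.
-/

open Finset Module

section FirstMoment

variable {ι α β : Type*} [DecidableEq α] [Fintype β] [Nonempty β]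

theorem dens_filter_restrict [Fintype α] (T : Finset α) (Q : (T → β) → Prop) [DecidablePred Q] :
    dens {f : α → β | Q (T.restrict f)} = dens {g : T → β | Q g} := by
  let e := Equiv.piEquivPiSubtypeProd (· ∈ T) (fun _ ↦ β)
  have h : ({f : α → β | Q (T.restrict f)} : Finset _).map e.toEmbedding =
      ({g : T → β | Q g} : Finset _) ×ˢ (univ : Finset ({x // x ∉ T} → β)) := by
    ext ⟨g, h⟩
    simp only [mem_map_equiv, mem_filter_univ, mem_product, mem_univ, and_true]
    exact iff_of_eq (congrArg Q (congrArg Prod.fst (e.apply_symm_apply (g, h))))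
  rw [← dens_map_equiv e, h, dens_eq_card_div_card, card_product, Fintype.card_prod, card_univ,
    Nat.cast_mul, Nat.cast_mul, mul_div_mul_right _ _ (by simp), dens_eq_card_div_card]

theorem exists_card_filter_restrict_le_sum_dens [Finite α] (F : Finset ι) (T : ι → Finset α)
    (Q : ∀ i, (T i → β) → Prop) [∀ i, DecidablePred (Q i)] :
    ∃ f : α → β, (#{i ∈ F | Q i ((T i).restrict f)} : ℚ≥0) ≤
      ∑ i ∈ F, dens {g : T i → β | Q i g} := by
  cases nonempty_fintype α
  suffices h : ∑ f : α → β, (#{i ∈ F | Q i ((T i).restrict f)} : ℚ≥0) ≤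
      ∑ _f : α → β, ∑ i ∈ F, dens {g : T i → β | Q i g} by
    simpa using exists_le_of_sum_le univ_nonempty h
  calc ∑ f : α → β, (#{i ∈ F | Q i ((T i).restrict f)} : ℚ≥0)
      = ∑ i ∈ F, (#{f : α → β | Q i ((T i).restrict f)} : ℚ≥0) := by
        simp_rw [natCast_card_filter]
        exact sum_comm
    _ = ∑ i ∈ F, Fintype.card (α → β) * dens {g : T i → β | Q i g} := by
        simp_rw [← dens_filter_restrict, card_mul_dens]
    _ ≤ ∑ _f : α → β, ∑ i ∈ F, dens {g : T i → β | Q i g} := by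
        rw [← mul_sum, sum_const, card_univ, nsmul_eq_mul]

end FirstMoment

open scoped Classical in
theorem dens_exists_eq_const_le (ι β : Type*) [Fintype ι] [Fintype β] :
    dens {h : ι → β | ∃ b, h = fun _ ↦ b} ≤
      (Fintype.card β / Fintype.card β ^ Fintype.card ι : ℚ≥0) := by
  have hconst : ({h : ι → β | ∃ b, h = fun _ ↦ b} : Finset _) = univ.image fun b _ ↦ b := by
    ext h
    simp only [mem_filter_univ, mem_image, mem_univ, true_and, eq_comm]
  rw [hconst, dens_eq_card_div_card, Fintype.card_fun, Nat.cast_pow]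
  gcongr
  exact card_image_le

theorem iSup_fin_cons {α : Type*} [CompleteLattice α] {n : ℕ} (a : α) (f : Fin n → α) :
    ⨆ i, (Fin.cons a f : Fin (n + 1) → α) i = a ⊔ ⨆ i, f i := by
  simp_rw [iSup, Fin.range_cons, sSup_insert]

section Graph

variable {V α : Type*}

theorem cliqueFree_of_hom {G : SimpleGraph α} {H : SimpleGraph V} {t : ℕ} (φ : G →g H)
    (hH : H.CliqueFree t) : G.CliqueFree t := by
  contrapose! hH
  let ψ := φ.comp (SimpleGraph.topEmbeddingOfNotCliqueFree hH).toHom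
  exact SimpleGraph.IsContained.not_cliqueFree ⟨ψ, SimpleGraph.Hom.injective_of_top_hom ψ⟩

open scoped Classical in
/-- The probability that `t` independent uniformly random vertices of `H`, repetitions allowed,
are pairwise non-adjacent. This is also the chance that a given `t`-set is independent in the
pullback of `H` along a random map, which need not be injective. -/
noncomputable def indepTupleDensity [Fintype V] (H : SimpleGraph V) (t : ℕ) : ℚ≥0 :=
  dens {g : Fin t → V | ∀ i j, ¬ H.Adj (g i) (g j)}

open scoped Classical in
theorem dens_indep_eq_indepTupleDensity [Fintype V] (H : SimpleGraph V) {ι : Type*} [Fintype ι]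
    {t : ℕ} (hι : Fintype.card ι = t) :
    dens {g : ι → V | ∀ i j, ¬ H.Adj (g i) (g j)} = indepTupleDensity H t := by
  let e := (Fintype.equivFinOfCardEq hι).arrowCongr (Equiv.refl V)
  rw [indepTupleDensity, ← dens_map_equiv e]
  congr 1
  ext g
  simp [e, mem_map_equiv, (Fintype.equivFinOfCardEq hι).forall_congr_left]

open scoped Classical in
theorem exists_forall_not_isNClique_not_isNIndepSet [Finite α] {F : Finset (Finset α)} {t : ℕ}
    (hF : ∀ S ∈ F, #S = t) (hcard : 2 * #F < 2 ^ t.choose 2) :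
    ∃ R : SimpleGraph α, ∀ S ∈ F, ¬ R.IsNClique t S ∧ ¬ R.IsNIndepSet t S := by
  let E (S : Finset α) : Finset (Sym2 α) := S.offDiag.image Sym2.mk.uncurry
  obtain ⟨g, hg⟩ := exists_card_filter_restrict_le_sum_dens F E
    fun S (h : E S → Bool) ↦ ∃ b, h = fun _ ↦ b
  have hdens (S) (hS : S ∈ F) :
      dens {h : E S → Bool | ∃ b, h = fun _ ↦ b} ≤ 2 / 2 ^ t.choose 2 := by
    have hE : Fintype.card (E S) = t.choose 2 := by
      rw [Fintype.card_coe, Sym2.card_image_offDiag, hF S hS]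
    have hle := dens_exists_eq_const_le (E S) Bool
    rw [hE, Fintype.card_bool, Nat.cast_ofNat] at hle
    convert hle
  have hnone : #{S ∈ F | ∃ b, (E S).restrict g = fun _ ↦ b} = 0 := by
    rw [← Nat.cast_lt_one (α := ℚ≥0)]
    refine (hg.trans (sum_le_card_nsmul _ _ _ hdens)).trans_lt ?_
    rw [nsmul_eq_mul, mul_div_assoc', div_lt_one (by positivity), mul_comm]
    exact_mod_cast hcard
  rw [card_eq_zero, filter_eq_empty_iff] at hnone
  have hE {S : Finset α} {b : Bool} (h : ∀ x ∈ S, ∀ y ∈ S, x ≠ y → g s(x, y) = b) :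
      (E S).restrict g = fun _ ↦ b := by
    ext ⟨e, he⟩
    obtain ⟨⟨x, y⟩, hxy, rfl⟩ := mem_image.1 he
    obtain ⟨hx, hy, hne⟩ := mem_offDiag.1 hxy
    exact h x hx y hy hne
  refine ⟨.fromEdgeSet {e | g e = true}, fun S hS ↦
    ⟨fun h ↦ hnone hS ⟨true, hE fun x hx y hy hxy ↦ ?_⟩,
      fun h ↦ hnone hS ⟨false, hE fun x hx y hy hxy ↦ ?_⟩⟩⟩
  · exact (SimpleGraph.fromEdgeSet_adj _ |>.1 (h.isClique hx hy hxy)).1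
  · simpa [hxy] using h.isIndepSet hx hy hxy

variable [Fintype α]

open scoped Classical in
theorem exists_card_isNIndepSet_sup_comap_le [Fintype V] [Nonempty V] (G : SimpleGraph α)
    (H : SimpleGraph V) (t : ℕ) :
    ∃ f : α → V, (#{S | (G ⊔ H.comap f).IsNIndepSet t S} : ℚ≥0) ≤
      indepTupleDensity H t * #{S | G.IsNIndepSet t S} := by
  obtain ⟨f, hf⟩ := exists_card_filter_restrict_le_sum_dens {S | G.IsNIndepSet t S}
    (fun S : Finset α ↦ S) fun _ g ↦ ∀ i j, ¬ H.Adj (g i) (g j)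
  refine ⟨f, le_trans (Nat.cast_le.2 (card_le_card fun S hS ↦ ?_)) (hf.trans_eq ?_)⟩
  · simp only [mem_filter, mem_univ, true_and] at hS ⊢
    have hind {x y} (hx : x ∈ S) (hy : y ∈ S) (h : (G ⊔ H.comap f).Adj x y) : False :=
      hS.isIndepSet hx hy h.ne h
    exact ⟨⟨fun x hx y hy _ h ↦ hind hx hy (.inl h), hS.card_eq⟩,
      fun x y h ↦ hind x.2 y.2 (.inr h)⟩
  · rw [mul_comm, ← nsmul_eq_mul, ← sum_const]
    refine sum_congr rfl fun S hS ↦ ?_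
    have hS : #S = t := ((mem_filter_univ _).1 hS).card_eq
    convert dens_indep_eq_indepTupleDensity H ((Fintype.card_coe S).trans hS)

open scoped Classical in
theorem exists_cliqueFree_card_isNIndepSet_iSup_le [Fintype V] [Nonempty V] {H : SimpleGraph V}
    {t : ℕ} (hH : H.CliqueFree t) (L : ℕ) :
    ∃ G : Fin L → SimpleGraph α, (∀ i, (G i).CliqueFree t) ∧
      (#{S | (⨆ i, G i).IsNIndepSet t S} : ℚ≥0) ≤
        indepTupleDensity H t ^ L * (Fintype.card α).choose t := by
  induction L with
  | zero =>
    refine ⟨Fin.elim0, fun i ↦ i.elim0, ?_⟩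
    rw [pow_zero, one_mul, ← card_univ, ← card_powersetCard, Nat.cast_le]
    exact card_le_card fun S hS ↦ mem_powersetCard_univ.2 ((mem_filter_univ _).1 hS).card_eq
  | succ L ih =>
    obtain ⟨G, hG, hcard⟩ := ih
    obtain ⟨f, hf⟩ := exists_card_isNIndepSet_sup_comap_le (⨆ i, G i) H t
    refine ⟨Fin.cons (H.comap f) G,
      Fin.cases (cliqueFree_of_hom (SimpleGraph.Hom.comap f H) hH) hG, ?_⟩
    rw [iSup_fin_cons, sup_comm, pow_succ', mul_assoc]
    convert hf.trans (mul_le_mul_right hcard _)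

theorem exists_cliqueFree_iSup_eq_top [Fintype V] [Nonempty V] {H : SimpleGraph V}
    {t L : ℕ} (hH : H.CliqueFree t)
    (hcard : 2 * (indepTupleDensity H t ^ L * (Fintype.card α).choose t) < 2 ^ t.choose 2) :
    ∃ G : Fin (L + 2) → SimpleGraph α, (∀ i, (G i).CliqueFree t) ∧ ⨆ i, G i = ⊤ := by
  classical
  obtain ⟨G, hG, hle⟩ := exists_cliqueFree_card_isNIndepSet_iSup_le (α := α) hH L
  set U := ⨆ i, G i with hU
  obtain ⟨R, hR⟩ := exists_forall_not_isNClique_not_isNIndepSet (t := t)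
    (F := {S | U.IsNIndepSet t S}) (fun S hS ↦ ((mem_filter_univ _).1 hS).card_eq)
    (by exact_mod_cast (mul_le_mul_right hle 2).trans_lt hcard)
  have hfree {R' : SimpleGraph α} (hR' : ∀ S, U.IsNIndepSet t S → ¬ R'.IsNClique t S) :
      (R' ⊓ Uᶜ).CliqueFree t := fun S hS ↦
    hR' S ((SimpleGraph.isNClique_compl _).1 (hS.mono inf_le_right)) (hS.mono inf_le_left)
  refine ⟨Fin.cons (R ⊓ Uᶜ) (Fin.cons (Rᶜ ⊓ Uᶜ) G), ?_, ?_⟩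
  · refine Fin.cases (hfree fun S hS ↦ (hR S ?_).1) (Fin.cases (hfree fun S hS ↦ ?_) hG)
    · exact (mem_filter_univ _).2 hS
    · rw [SimpleGraph.isNClique_compl]
      exact (hR S ((mem_filter_univ _).2 hS)).2
  · rw [iSup_fin_cons, iSup_fin_cons, ← hU, ← sup_assoc, ← inf_sup_right, sup_compl_eq_top,
      top_inf_eq, compl_sup_eq_top]

end Graph

theorem exists_coloring_of_iSup_eq_top {α : Type*} {ℓ t : ℕ} [NeZero ℓ]
    {G : Fin ℓ → SimpleGraph α} (hG : ∀ i, (G i).CliqueFree t) (htop : ⨆ i, G i = ⊤) :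
    ∃ χ : α → α → Fin ℓ, (∀ x y, χ x y = χ y x) ∧
      ¬ ∃ (S : Finset α) (c : Fin ℓ), S.card = t ∧ ∀ x ∈ S, ∀ y ∈ S, x ≠ y → χ x y = c := by
  have hcover (e : Sym2 α) : ∃ c, ¬ e.IsDiag → e ∈ (G c).edgeSet := by
    induction e with | _ x y
    by_cases hxy : x = y
    · exact ⟨0, fun h ↦ (h hxy).elim⟩
    · have h : (⨆ i, G i).Adj x y := by rwa [htop, SimpleGraph.top_adj]
      exact (SimpleGraph.iSup_adj.1 h).imp fun c hc _ ↦ hc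
  choose χ hχ using hcover
  refine ⟨fun x y ↦ χ s(x, y), fun x y ↦ congrArg χ Sym2.eq_swap, ?_⟩
  rintro ⟨S, c, hS, hmono⟩
  refine hG c S ⟨fun x hx y hy hxy ↦ ?_, hS⟩
  rw [← hmono x hx y hy hxy]
  exact hχ s(x, y) hxy

section NonorthogonalGraph

variable {R M : Type*} [CommRing R] [AddCommGroup M] [Module R M] {B : LinearMap.BilinForm R M}

/-- The graph on a module in which two vectors are adjacent if they are not orthogonal with
respect to the alternating form `B`. It serves as a source of graphs with small cliques and few
independent tuples. -/
def nonorthogonalGraph (B : LinearMap.BilinForm R M) (hB : B.IsAlt) : SimpleGraph M where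
  Adj x y := B x y ≠ 0
  symm := ⟨fun _ _ ↦ mt hB.eq_iff.2⟩
  loopless := ⟨fun x h ↦ h (hB x)⟩

theorem card_le_finrank_add_one_of_pairwise_eq_one [Nontrivial R] [Module.Finite R M]
    (hB : B.IsAlt) {s : Finset M} (h : (s : Set M).Pairwise fun x y ↦ B x y = 1) :
    #s ≤ finrank R M + 1 := by
  classical
  obtain rfl | ⟨a, ha⟩ := s.eq_empty_or_nonempty
  · simp
  have ha_right (x : s.erase a) : B x a = 1 :=
    h (mem_of_mem_erase x.2) ha (ne_of_mem_erase x.2)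
  have hlin : LinearIndependent R fun x : s.erase a ↦ (x : M) := by
    refine .of_pairwise_dual_eq_zero_one _ (fun y ↦ B.flip a - B.flip y) (fun y x hyx ↦ ?_)
      fun x ↦ ?_
    · have hxy : B x y = 1 := h (mem_of_mem_erase x.2) (mem_of_mem_erase y.2)
        fun hxy ↦ hyx (Subtype.ext hxy.symm)
      simp [ha_right, hxy]
    · simp [ha_right, hB.self_eq_zero]
  rw [← card_erase_add_one ha]
  exact Nat.add_le_add_right hlin.finset_card_le_finrank 1

theorem cliqueFree_nonorthogonalGraph [Module (ZMod 2) M] [Module.Finite (ZMod 2) M]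
    {B : LinearMap.BilinForm (ZMod 2) M} (hB : B.IsAlt) {t : ℕ} (ht : finrank (ZMod 2) M + 1 < t) :
    (nonorthogonalGraph B hB).CliqueFree t := by
  intro s hs
  have hle := card_le_finrank_add_one_of_pairwise_eq_one hB
    fun x hx y hy hxy ↦ Fin.eq_one_of_ne_zero (B x y) (hs.isClique hx hy hxy)
  rw [hs.card_eq] at hle
  omega

end NonorthogonalGraph

section IsotropicTuples

variable {R M : Type*} [CommRing R] [AddCommGroup M] [Module R M] {B : LinearMap.BilinForm R M}

theorem span_le_orthogonal_span_iff {s : Set M} :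
    Submodule.span R s ≤ B.orthogonal (Submodule.span R s) ↔ ∀ x ∈ s, ∀ y ∈ s, B x y = 0 := by
  refine ⟨fun h x hx y hy ↦ h (Submodule.subset_span hy) x (Submodule.subset_span hx),
    fun h y hy x hx ↦ ?_⟩
  exact Submodule.span_induction₂ (p := fun x y _ _ ↦ B x y = 0)
    (fun x y hx hy ↦ h x hx y hy) (by simp) (by simp)
    (by simp +contextual) (by simp +contextual) (by simp +contextual) (by simp +contextual) hx hy

variable [Fintype M] {U : Submodule R M} {n : ℕ}

open scoped Classical in
/-- The `n`-tuples of vectors which together with `U` span a totally isotropic submodule, that is,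
one contained in its own orthogonal complement. Keeping track of `U` lets the pairwise orthogonal
tuples, which are the case `U = ⊥`, be counted one vector at a time. -/
noncomputable def isotropicExtensions (B : LinearMap.BilinForm R M) (U : Submodule R M) (n : ℕ) :
    Finset (Fin n → M) :=
  {g | U ⊔ Submodule.span R (Set.range g) ≤ B.orthogonal (U ⊔ Submodule.span R (Set.range g))}

theorem mem_isotropicExtensions {g : Fin n → M} :
    g ∈ isotropicExtensions B U n ↔
      U ⊔ Submodule.span R (Set.range g) ≤ B.orthogonal (U ⊔ Submodule.span R (Set.range g)) := by
  simp [isotropicExtensions]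

theorem le_orthogonal_of_isotropicExtensions_nonempty (h : (isotropicExtensions B U n).Nonempty) :
    U ≤ B.orthogonal U := by
  obtain ⟨g, hg⟩ := h
  exact (le_sup_left.trans (mem_isotropicExtensions.1 hg)).trans
    (LinearMap.BilinForm.orthogonal_le le_sup_left)

theorem card_isotropicExtensions_succ (U : Submodule R M) (n : ℕ) :
    #(isotropicExtensions B U (n + 1)) = ∑ v, #(isotropicExtensions B (U ⊔ R ∙ v) n) := by
  classical
  simp_rw [isotropicExtensions, card_filter]
  rw [← (Fin.consEquiv fun _ ↦ M).sum_comp, Fintype.sum_prod_type]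
  simp [Fin.consEquiv, Fin.range_cons, Submodule.span_insert, sup_assoc]

end IsotropicTuples

section Nondegenerate

variable {K V : Type*} [Field K] [AddCommGroup V] [Module K V] {B : LinearMap.BilinForm K V}

theorem finrank_le_of_le_orthogonal [FiniteDimensional K V] (hnd : B.Nondegenerate) {k : ℕ}
    (hV : finrank K V ≤ 2 * k) {U : Submodule K V} (hU : U ≤ B.orthogonal U) :
    finrank K U ≤ k := by
  have hle := Submodule.finrank_mono hU
  rw [LinearMap.BilinForm.finrank_orthogonal hnd U] at hle
  omega

variable [Fintype K] [Fintype V]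

theorem card_filter_mem_submodule (W : Submodule K V) [DecidablePred (· ∈ W)] :
    #{v | v ∈ W} = Fintype.card K ^ finrank K W := by
  rw [← Module.card_eq_pow_finrank (K := K) (V := W), Fintype.card_subtype]

theorem card_isotropicExtensions_succ_le {U : Submodule K V} {n C : ℕ}
    (hC : ∀ v ∉ U, #(isotropicExtensions B (U ⊔ K ∙ v) n) ≤ C) :
    #(isotropicExtensions B U (n + 1)) ≤
      Fintype.card K ^ finrank K U * #(isotropicExtensions B U n) +
        Fintype.card K ^ finrank K (B.orthogonal U) * C := by
  classical
  have hterm (v : V) : #(isotropicExtensions B (U ⊔ K ∙ v) n) ≤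
      (if v ∈ U then #(isotropicExtensions B U n) else 0) +
        if v ∈ B.orthogonal U then C else 0 := by
    by_cases hv : v ∈ U
    · rw [sup_eq_left.2 ((Submodule.span_singleton_le_iff_mem v U).2 hv), if_pos hv]
      exact Nat.le_add_right _ _
    obtain h | hne := (isotropicExtensions B (U ⊔ K ∙ v) n).eq_empty_or_nonempty
    · simp [h]
    · have horth : v ∈ B.orthogonal U :=
        LinearMap.BilinForm.orthogonal_le le_sup_left
          (le_orthogonal_of_isotropicExtensions_nonempty hne
            (le_sup_right (a := U) (Submodule.mem_span_singleton_self v)))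
      exact le_add_left ((hC v hv).trans_eq (if_pos horth).symm)
  rw [card_isotropicExtensions_succ]
  refine (sum_le_sum fun v _ ↦ hterm v).trans_eq ?_
  simp_rw [sum_add_distrib, ← sum_filter, sum_const, card_filter_mem_submodule, smul_eq_mul]

theorem card_isotropicExtensions_le (hnd : B.Nondegenerate) {k : ℕ} (hV : finrank K V ≤ 2 * k)
    (n : ℕ) {m : ℕ} {U : Submodule K V} (hU : finrank K U + m = k) :
    #(isotropicExtensions B U n) ≤ 2 ^ n * Fintype.card K ^ (k * n + (m + 1).choose 2) := by
  set q := Fintype.card K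
  have hq : 1 ≤ q := Fintype.card_pos
  induction n generalizing m U with
  | zero =>
    calc #(isotropicExtensions B U 0) ≤ 1 := (card_le_univ _).trans_eq (by simp)
      _ ≤ _ := Nat.succ_le_of_lt (by positivity)
  | succ n ih =>
    set C := 2 ^ n * q ^ (k * n + m.choose 2) with hC
    have hchoose : (m + 1).choose 2 = m + m.choose 2 := by
      rw [Nat.choose_succ_succ' m 1, Nat.choose_one_right]
    have hout (v : V) (hv : v ∉ U) : #(isotropicExtensions B (U ⊔ K ∙ v) n) ≤ C := by
      obtain h | hne := (isotropicExtensions B (U ⊔ K ∙ v) n).eq_empty_or_nonempty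
      · simp [h]
      have hrank := Submodule.finrank_sup_span_singleton hv
      have hle := finrank_le_of_le_orthogonal hnd hV
        (le_orthogonal_of_isotropicExtensions_nonempty hne)
      obtain ⟨m, rfl⟩ : ∃ m', m = m' + 1 := ⟨m - 1, by omega⟩
      exact ih (by omega)
    calc #(isotropicExtensions B U (n + 1))
        ≤ q ^ finrank K U * #(isotropicExtensions B U n) + q ^ finrank K (B.orthogonal U) * C :=
        card_isotropicExtensions_succ_le hout
      _ ≤ q ^ k * (q ^ m * C) + q ^ (k + m) * C := by
        rw [LinearMap.BilinForm.finrank_orthogonal hnd]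
        gcongr
        · omega
        · exact (ih hU).trans_eq (by rw [hC, hchoose]; ring)
        · omega
      _ = 2 ^ (n + 1) * q ^ (k * (n + 1) + (m + 1).choose 2) := by
        rw [hC, hchoose]
        ring

theorem indepTupleDensity_nonorthogonalGraph_le (hB : B.IsAlt) (hnd : B.Nondegenerate) {k : ℕ}
    (hV : finrank K V = 2 * k) (t : ℕ) :
    indepTupleDensity (nonorthogonalGraph B hB) t ≤
      2 ^ t * Fintype.card K ^ (k + 1).choose 2 / Fintype.card K ^ (k * t) := by
  have hset : indepTupleDensity (nonorthogonalGraph B hB) t =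
      dens (isotropicExtensions B ⊥ t) := by
    classical
    refine congrArg dens (Finset.ext fun g ↦ ?_)
    simp [mem_isotropicExtensions, span_le_orthogonal_span_iff, nonorthogonalGraph]
  have hle := card_isotropicExtensions_le hnd hV.le t (m := k) (U := ⊥) (by simp)
  calc indepTupleDensity (nonorthogonalGraph B hB) t
      = #(isotropicExtensions B ⊥ t) / (Fintype.card K : ℚ≥0) ^ (2 * k * t) := by
        rw [hset, dens_eq_card_div_card, Fintype.card_fun, Fintype.card_fin,
          Module.card_eq_pow_finrank (K := K) (V := V), hV, ← pow_mul, Nat.cast_pow]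
    _ ≤ 2 ^ t * Fintype.card K ^ (k * t + (k + 1).choose 2) / Fintype.card K ^ (2 * k * t) := by
        gcongr
        exact_mod_cast hle
    _ = 2 ^ t * Fintype.card K ^ (k + 1).choose 2 / Fintype.card K ^ (k * t) := by
        field_simp
        ring

end Nondegenerate

section SymplecticGraph

variable (l R : Type*) [Fintype l] [DecidableEq l] [CommRing R]

theorem isAlt_toBilin'_J : (Matrix.toBilin' (Matrix.J l R)).IsAlt := by
  intro x
  rw [Matrix.toBilin'_apply', Matrix.J, Matrix.fromBlocks_mulVec, Matrix.dotProduct_block]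
  simp [Matrix.neg_mulVec, dotProduct_comm (x ∘ Sum.inr)]

theorem nondegenerate_toBilin'_J [IsDomain R] : (Matrix.toBilin' (Matrix.J l R)).Nondegenerate :=
  LinearMap.BilinForm.nondegenerate_toBilin'_of_det_ne_zero' _ (Matrix.isUnit_det_J l R).ne_zero

/-- The graph of non-orthogonal pairs for the standard symplectic form on `𝔽₂ ^ (2 * k)`, the host
of the random maps in the construction. -/
def symplecticGraph (k : ℕ) : SimpleGraph (Fin k ⊕ Fin k → ZMod 2) :=
  nonorthogonalGraph _ (isAlt_toBilin'_J (Fin k) (ZMod 2))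

theorem cliqueFree_symplecticGraph {k t : ℕ} (ht : 2 * k + 1 < t) :
    (symplecticGraph k).CliqueFree t :=
  cliqueFree_nonorthogonalGraph _ (by simpa [two_mul] using ht)

theorem indepTupleDensity_symplecticGraph_le (k t : ℕ) :
    (indepTupleDensity (symplecticGraph k) t : ℝ) ≤ 2 ^ (t + k * (k + 1) / 2 - k * t : ℝ) := by
  have hle : indepTupleDensity (symplecticGraph k) t ≤
      2 ^ t * Fintype.card (ZMod 2) ^ (k + 1).choose 2 / Fintype.card (ZMod 2) ^ (k * t) :=
    indepTupleDensity_nonorthogonalGraph_le _ (nondegenerate_toBilin'_J _ _) (by simp [two_mul]) t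
  have hchoose : ((k + 1).choose 2 : ℝ) = k * (k + 1) / 2 := by
    rw [Nat.cast_choose_two]
    push_cast
    ring
  calc (indepTupleDensity (symplecticGraph k) t : ℝ)
      ≤ 2 ^ t * 2 ^ (k + 1).choose 2 / 2 ^ (k * t) := by
        simpa [ZMod.card] using (NNRat.cast_le (K := ℝ)).2 hle
    _ = 2 ^ (t + k * (k + 1) / 2 - k * t : ℝ) := by
        rw [Real.rpow_sub two_pos, Real.rpow_add two_pos, ← hchoose, ← Nat.cast_mul]
        simp_rw [Real.rpow_natCast]

end SymplecticGraph

theorem ramsey_exponent_lt {t k L : ℝ} (hL : 0 ≤ L) (hk : 0 ≤ k) (hkt : 2 * k + 2 ≤ t)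
    (htk : t ≤ 2 * k + 3) :
    1 + (t + k * (k + 1) / 2 - k * t) * L + ((3 * (L + 2) / 8 - 1 / 4) * t - 3 * (L + 2)) * t <
      t * (t - 1) / 2 := by
  have hcolor : t + k * (k + 1) / 2 - k * t + 3 * t ^ 2 / 8 ≤ 3 * t := by
    nlinarith
  nlinarith [mul_le_mul_of_nonneg_right hcolor hL]

theorem exists_cliqueFree_iSup_eq_top_of_card_le {α : Type*} [Fintype α] {ℓ t : ℕ} (hℓ : 2 ≤ ℓ)
    (ht : 2 ≤ t) (hα : (Fintype.card α : ℝ) ≤ 2 ^ ((3 * ℓ / 8 - 1 / 4) * t - 3 * ℓ : ℝ)) :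
    ∃ G : Fin ℓ → SimpleGraph α, (∀ i, (G i).CliqueFree t) ∧ ⨆ i, G i = ⊤ := by
  obtain ⟨L, rfl⟩ := Nat.exists_eq_add_of_le' hℓ
  obtain ⟨k, hkt, htk⟩ : ∃ k, 2 * k + 2 ≤ t ∧ t ≤ 2 * k + 3 := ⟨(t - 2) / 2, by omega, by omega⟩
  refine exists_cliqueFree_iSup_eq_top (cliqueFree_symplecticGraph (k := k) hkt) ?_
  rw [← NNRat.cast_lt (K := ℝ)]
  push_cast
  calc (2 : ℝ) * (indepTupleDensity (symplecticGraph k) t ^ L * (Fintype.card α).choose t)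
      ≤ 2 * ((2 ^ (t + k * (k + 1) / 2 - k * t : ℝ)) ^ L *
          (2 ^ ((3 * (L + 2) / 8 - 1 / 4) * t - 3 * (L + 2) : ℝ)) ^ t) := by
        gcongr
        · exact indepTupleDensity_symplecticGraph_le k t
        · refine (Nat.cast_le.2 (Nat.choose_le_pow _ t)).trans ?_
          push_cast at hα ⊢
          gcongr
    _ = 2 ^ (1 + (t + k * (k + 1) / 2 - k * t) * L +
          ((3 * (L + 2) / 8 - 1 / 4) * t - 3 * (L + 2)) * t : ℝ) := by
        rw [Real.rpow_add two_pos, Real.rpow_add two_pos, Real.rpow_one,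
          Real.rpow_mul_natCast zero_le_two, Real.rpow_mul_natCast zero_le_two, mul_assoc]
    _ < 2 ^ (t * (t - 1) / 2 : ℝ) := by
        refine Real.rpow_lt_rpow_of_exponent_lt one_lt_two ?_
        exact ramsey_exponent_lt L.cast_nonneg k.cast_nonneg (by exact_mod_cast hkt)
          (by exact_mod_cast htk)
    _ = 2 ^ t.choose 2 := by rw [← Nat.cast_choose_two, Real.rpow_natCast]

theorem natCeil_two_rpow_le {y z : ℝ} (hyz : y + 1 ≤ z) (hz : 1 ≤ z) :
    (⌈(2 : ℝ) ^ y⌉₊ : ℝ) ≤ 2 ^ z := by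
  calc (⌈(2 : ℝ) ^ y⌉₊ : ℝ) ≤ ⌈(2 : ℝ) ^ (z - 1)⌉₊ := by
        gcongr
        · exact one_le_two
        · linarith
    _ ≤ 2 * 2 ^ (z - 1) := Nat.ceil_le_two_mul <| (by norm_num : (2⁻¹ : ℝ) ≤ 1).trans <|
        Real.one_le_rpow one_le_two (by linarith)
    _ = 2 ^ z := by rw [Real.rpow_sub_one two_ne_zero, mul_div_cancel₀ _ two_ne_zero]

/-- For every fixed `ℓ ≥ 2` and every `ε > 0`, there is `t₀` such that for all `t ≥ t₀`,
the `ℓ`-color Ramsey number satisfies `r(t;ℓ) > 2^{((3ℓ/8) - 1/4 - ε) t}`: there is an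
`ℓ`-coloring of the edges of the complete graph on `⌈2^{((3ℓ/8) - 1/4 - ε) t}⌉` vertices
with no monochromatic clique of size `t`. -/
theorem multicolor_ramsey_lower_bound (ℓ : ℕ) (hℓ : 2 ≤ ℓ) (ε : ℝ) (hε : 0 < ε) :
    ∃ t₀ : ℕ, ∀ t : ℕ, t₀ ≤ t →
      ∃ χ : Fin (⌈(2 : ℝ) ^ (((3 * ℓ : ℝ) / 8 - 1 / 4 - ε) * t)⌉₊) →
            Fin (⌈(2 : ℝ) ^ (((3 * ℓ : ℝ) / 8 - 1 / 4 - ε) * t)⌉₊) → Fin ℓ,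
        (∀ x y, χ x y = χ y x) ∧
        ¬ ∃ (S : Finset (Fin (⌈(2 : ℝ) ^ (((3 * ℓ : ℝ) / 8 - 1 / 4 - ε) * t)⌉₊)))
            (c : Fin ℓ), S.card = t ∧ ∀ x ∈ S, ∀ y ∈ S, x ≠ y → χ x y = c := by
  have : NeZero ℓ := ⟨by omega⟩
  refine ⟨max 16 ⌈(3 * ℓ + 1) / ε⌉₊, fun t ht ↦ ?_⟩
  have ht16 : 16 ≤ t := (le_max_left _ _).trans ht
  have hεt : 3 * ℓ + 1 ≤ t * ε := (div_le_iff₀ hε).1 (Nat.ceil_le.1 ((le_max_right _ _).trans ht))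
  have hz : 1 ≤ (3 * ℓ / 8 - 1 / 4) * t - 3 * (ℓ : ℝ) := by
    have hℓ' : (2 : ℝ) ≤ ℓ := by exact_mod_cast hℓ
    have ht' : (16 : ℝ) ≤ t := by exact_mod_cast ht16
    nlinarith
  obtain ⟨G, hfree, htop⟩ := exists_cliqueFree_iSup_eq_top_of_card_le (t := t) hℓ (by omega) <| by
    rw [Fintype.card_fin]
    exact natCeil_two_rpow_le (y := (3 * ℓ / 8 - 1 / 4 - ε) * t) (by linarith) hz
  exact exists_coloring_of_iSup_eq_top hfree htop
end

section
/- Let t be an even positive integer, let V ⊆ 𝔽₂^t be the set of vectors of even Hamming weight, and let G₀ be the simple graph on vertex set V in which distinct u, v ∈ V are adjacent if and only if u · v = 1 (scalar product over 𝔽₂). Then G₀ contains no clique of order t, i.e., there is no set of t vertices of G₀ that are pairwise adjacent. -/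
/-!
Over `𝔽₂` a vector of even weight is self-orthogonal, so the Gram matrix of a clique of `m` vertices
is `J - I`. Pairing a linear relation with each vertex shows that every coefficient equals the sum
`σ` of all of them, whence `m σ = σ`. For even `m` this forces the relation to be trivial: the
clique is linearly independent. But it lies in the hyperplane of vectors with coordinate sum `0`, so
`m` is less than the dimension of the space.
-/

open Finset Module

theorem linearIndependent_of_pairwise_dual_eq_one_zero {R M ι : Type*} [CommRing R]
    [NoZeroDivisors R] [AddCommGroup M] [Module R M] [Fintype ι] {v : ι → M} {f : ι → Dual R M}
    (hone : Pairwise fun i j => f i (v j) = 1) (hzero : ∀ i, f i (v i) = 0)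
    (hcard : (Fintype.card ι : R) ≠ 1) : LinearIndependent R v := by
  classical
  refine Fintype.linearIndependent_iff.2 fun c hc => ?_
  have coeff_eq_sum (i : ι) : c i = ∑ j, c j := by
    have hoff : ∑ j ∈ univ.erase i, c j * f i (v j) = ∑ j ∈ univ.erase i, c j :=
      sum_congr rfl fun j hj => by rw [hone (ne_of_mem_erase hj).symm, mul_one]
    have hpair : ∑ j, c j * f i (v j) = 0 := by
      simpa only [map_sum, map_smul, smul_eq_mul, map_zero] using congrArg (f i) hc
    rw [← add_sum_erase _ _ (mem_univ i), hzero, mul_zero, zero_add, hoff] at hpair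
    rw [← add_sum_erase _ c (mem_univ i), hpair, add_zero]
  have card_mul_sum : (Fintype.card ι : R) * ∑ j, c j = ∑ j, c j :=
    calc (Fintype.card ι : R) * ∑ j, c j = ∑ _i : ι, ∑ j, c j := by
          rw [sum_const, card_univ, nsmul_eq_mul]
      _ = ∑ j, c j := (sum_congr rfl fun i _ => coeff_eq_sum i).symm
  have sum_eq_zero : ∑ j, c j = 0 := by
    by_contra hne
    exact hcard ((mul_eq_right₀ hne).1 card_mul_sum)
  exact fun i => (coeff_eq_sum i).trans sum_eq_zero

theorem card_lt_finrank_of_linearIndependent_of_map_eq_zero {K V W ι : Type*}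
    [DivisionRing K] [AddCommGroup V] [Module K V] [FiniteDimensional K V] [AddCommGroup W]
    [Module K W] [Fintype ι] {v : ι → V} {f : V →ₗ[K] W} (hv : LinearIndependent K v) (hf : f ≠ 0)
    (hfv : ∀ i, f (v i) = 0) : Fintype.card ι < finrank K V := by
  have hspan : Submodule.span K (Set.range v) ≤ LinearMap.ker f :=
    Submodule.span_le.2 (Set.range_subset_iff.2 hfv)
  calc Fintype.card ι = finrank K (Submodule.span K (Set.range v)) :=
        (finrank_span_eq_card hv).symm
    _ ≤ finrank K (LinearMap.ker f) := Submodule.finrank_mono hspan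
    _ < finrank K V := Submodule.finrank_lt (mt LinearMap.ker_eq_top.1 hf)

theorem zmod_two_sum_eq_zero_iff_even_card_ne_zero {ι : Type*} (s : Finset ι) (v : ι → ZMod 2) :
    ∑ i ∈ s, v i = 0 ↔ Even #{i ∈ s | v i ≠ 0} := by
  have sum_eq_card : ∑ i ∈ s, v i = (#{i ∈ s | v i ≠ 0} : ZMod 2) := by
    rw [← sum_filter_ne_zero, cast_card]
    exact sum_congr rfl fun i hi => Fin.eq_one_of_ne_zero (v i) (mem_filter.1 hi).2
  rw [sum_eq_card, ZMod.natCast_eq_zero_iff_even]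

theorem zmod_two_dotProduct_self {ι : Type*} [Fintype ι] (v : ι → ZMod 2) :
    v ⬝ᵥ v = ∑ i, v i :=
  sum_congr rfl fun i _ => by rw [← sq, ZMod.pow_card]

theorem conlon_ferber_no_clique_general {ι : Type*} [Fintype ι] [Nonempty ι]
    (S : Finset (ι → ZMod 2)) (hcard : Even #S) (heven : ∀ v ∈ S, Even #{i | v i ≠ 0})
    (hadj : ∀ u ∈ S, ∀ v ∈ S, u ≠ v → ∑ i, u i * v i = 1) : #S < Fintype.card ι := by
  have hsum (v : S) : ∑ i, v.1 i = 0 :=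
    (zmod_two_sum_eq_zero_iff_even_card_ne_zero _ _).2 (heven v v.2)
  have hindep : LinearIndependent (ZMod 2) ((↑) : S → ι → ZMod 2) := by
    refine linearIndependent_of_pairwise_dual_eq_one_zero
      (f := fun u => dotProductBilin (ZMod 2) (ZMod 2) u.1)
      (fun u v huv => hadj u u.2 v v.2 (Subtype.coe_ne_coe.2 huv))
      (fun v => (zmod_two_dotProduct_self v.1).trans (hsum v)) ?_
    rw [Fintype.card_coe, (ZMod.natCast_eq_zero_iff_even).2 hcard]
    exact zero_ne_one
  have hone : dotProductBilin (ZMod 2) (ZMod 2) (1 : ι → ZMod 2) ≠ 0 := by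
    classical
    obtain ⟨i⟩ := ‹Nonempty ι›
    intro h
    simpa using LinearMap.congr_fun h (Pi.single i 1)
  simpa using card_lt_finrank_of_linearIndependent_of_map_eq_zero hindep hone
    fun v => (one_dotProduct v.1).trans (hsum v)

/-- Let `t` be an even positive integer. In the graph `G₀` on the even-weight vectors of
`𝔽₂^t` where distinct `u, v` are adjacent iff `u ⬝ v = 1`, there is no clique of order `t`:
no set of `t` even-weight vectors is pairwise adjacent. -/
theorem conlon_ferber_no_clique (t : ℕ) (ht : 0 < t) (htEven : Even t) :
    ¬ ∃ S : Finset (Fin t → ZMod 2),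
        S.card = t ∧
        (∀ v ∈ S, Even (Finset.univ.filter (fun i => v i ≠ 0)).card) ∧
        (∀ u ∈ S, ∀ v ∈ S, u ≠ v → ∑ i, u i * v i = 1) := by
  rintro ⟨S, hcard, heven, hadj⟩
  have : Nonempty (Fin t) := ⟨⟨0, ht⟩⟩
  have hlt := conlon_ferber_no_clique_general S (hcard.symm ▸ htEven) heven hadj
  exact hlt.ne (hcard.trans (Fintype.card_fin t).symm)
end

section
/- For every real ε > 0 there exists t₀ such that for every even integer t ≥ t₀ the following holds. Let V ⊆ 𝔽₂^t be the set of vectors of even Hamming weight and let G₀ be the simple graph on V in which distinct u, v are adjacent iff u · v = 1. Then the number of independent sets of G₀ of cardinality at most t is at most 2^{(5/8 + ε)·t²}. -/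
/-!
Vectors of even weight are self-orthogonal, so listing the elements of a nonempty independent set
of `G₀` with at most `t` elements, with repetitions, gives a `t`-tuple whose entries are orthogonal
to each other and to themselves.

Consider such `n`-tuples in a space of dimension `D` over `𝔽_q` with a nondegenerate form, and
suppose that the rank is `d`. At one of `n.choose d ≤ 2 ^ n` sets of positions the entry raises the
rank; raising it from `i` to `i + 1`, it lies in the orthogonal complement of the earlier entries,
which leaves `q ^ (D - i)` choices. Each of the other `n - d` entries lies in the span of the
earlier ones, which leaves at most `q ^ d` choices. The span is totally isotropic, so `d ≤ D / 2`,
and in this range the number of choices is at most its value `q ^ (D * n / 2 + D ^ 2 / 8 + D / 4)`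
at `d = D / 2`. For `n = D = t` the leading term of this exponent is `5 * t ^ 2 / 8`.
-/

open Module Submodule
open scoped Finset

section Counting

variable {α : Type*}

lemma exists_range_eq_coe_of_card_le {n : ℕ} {S : Finset α} (hS : S.Nonempty) (hn : #S ≤ n) :
    ∃ f : Fin n → α, Set.range f = S := by
  have := hS.to_subtype
  obtain ⟨f, hf⟩ : ∃ f : Fin n → S, f.Surjective := Function.exists_surjective_iff.2
    ⟨inferInstance, Function.Embedding.nonempty_of_card_le (by simpa using hn)⟩
  exact ⟨Subtype.val ∘ f, by rw [hf.range_comp, Subtype.range_coe]⟩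

variable [Finite α]

lemma ncard_le_mul_ncard_of_tail {n k : ℕ} {s : Set (Fin (n + 1) → α)} {T : Set (Fin n → α)}
    (W : (Fin n → α) → Set α) (hT : ∀ f ∈ s, Fin.tail f ∈ T) (hW : ∀ f ∈ s, f 0 ∈ W (Fin.tail f))
    (hk : ∀ g ∈ T, (W g).ncard ≤ k) : s.ncard ≤ k * T.ncard := by
  classical
  have := Fintype.ofFinite T
  let headTail (f : s) : Σ g : T, W g := ⟨⟨Fin.tail f.1, hT f f.2⟩, ⟨f.1 0, hW f f.2⟩⟩
  have headTail_injective : headTail.Injective := fun f f' h => by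
    have htail : Fin.tail f.1 = Fin.tail f'.1 := congrArg (fun p => p.1.1) h
    have hhead : f.1 0 = f'.1 0 := congrArg (fun p => p.2.1) h
    rw [Subtype.ext_iff, ← Fin.cons_self_tail f.1, ← Fin.cons_self_tail f'.1, htail, hhead]
  calc s.ncard
    _ ≤ Nat.card (Σ g : T, W g) := Nat.card_le_card_of_injective headTail headTail_injective
    _ = ∑ g : T, (W g).ncard := Nat.card_sigma
    _ ≤ Fintype.card T * k := Finset.sum_le_card_nsmul _ _ _ fun g _ => hk g g.2
    _ = k * T.ncard := by rw [mul_comm, ← Nat.card_eq_fintype_card, Nat.card_coe_set_eq]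

/-- The `+ 1` is for the empty set, which no tuple of positive length lists. -/
lemma ncard_finset_forall_rel_le (r : α → α → Prop) (n : ℕ) :
    {S : Finset α | #S ≤ n ∧ ∀ u ∈ S, ∀ w ∈ S, r u w}.ncard ≤
      {f : Fin n → α | ∀ i j, r (f i) (f j)}.ncard + 1 := by
  classical
  refine (Set.ncard_le_ncard (t := insert ∅ ((fun f => Finset.univ.image f) '' _)) ?_).trans
    ((Set.ncard_insert_le _ _).trans (Nat.add_le_add_right Set.ncard_image_le 1))
  rintro S ⟨hn, hr⟩
  rcases S.eq_empty_or_nonempty with rfl | hS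
  · exact Set.mem_insert _ _
  obtain ⟨f, hf⟩ := exists_range_eq_coe_of_card_le hS hn
  have hmem (i : Fin n) : f i ∈ S := by simp [← Finset.mem_coe, ← hf]
  exact Or.inr ⟨f, fun i j => hr _ (hmem i) _ (hmem j), Finset.coe_injective (by simpa using hf)⟩

end Counting

section BilinForm

lemma mem_orthogonal_span_iff {R M : Type*} [CommSemiring R] [AddCommMonoid M] [Module R M]
    {B : LinearMap.BilinForm R M} {s : Set M} {x : M} :
    x ∈ B.orthogonal (span R s) ↔ ∀ y ∈ s, B y x = 0 :=
  span_le (p := LinearMap.ker (B.flip x))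

lemma two_mul_finrank_le_of_le_orthogonal {K V : Type*} [Field K] [AddCommGroup V] [Module K V]
    [FiniteDimensional K V] {B : LinearMap.BilinForm K V} (hB : B.Nondegenerate)
    {W : Submodule K V} (hW : W ≤ B.orthogonal W) : 2 * finrank K W ≤ finrank K V := by
  have hle := finrank_mono hW
  rw [LinearMap.BilinForm.finrank_orthogonal hB] at hle
  have := finrank_le W
  omega

lemma dotProductBilin_nondegenerate (R ι : Type*) [CommSemiring R] [Fintype ι] :
    (dotProductBilin R R : LinearMap.BilinForm R (ι → R)).Nondegenerate :=
  ⟨fun v hv => dotProduct_eq_zero v hv,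
    fun v hv => dotProduct_eq_zero v fun w => dotProduct_comm w v ▸ hv w⟩

end BilinForm

section Exponent

lemma two_mul_sum_range_tsub {D d : ℕ} (hd : d ≤ D) :
    2 * ∑ i ∈ Finset.range d, (D - i) + d ^ 2 = 2 * D * d + d := by
  induction d with
  | zero => simp
  | succ d ih =>
    obtain ⟨k, rfl⟩ := Nat.exists_eq_add_of_lt hd
    have := ih (by omega)
    rw [Finset.sum_range_succ, show d + k + 1 - d = k + 1 by omega]
    linarith

lemma isotropic_exponent_le {n d D : ℕ} (hdn : d ≤ n) (hdD : 2 * d ≤ D) :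
    d * (n - d) + ∑ i ∈ Finset.range d, (D - i) ≤ (4 * D * n + D ^ 2 + 2 * D) / 8 := by
  have hsum := two_mul_sum_range_tsub (show d ≤ D by omega)
  obtain ⟨a, rfl⟩ := Nat.exists_eq_add_of_le hdn
  obtain ⟨b, rfl⟩ := Nat.exists_eq_add_of_le hdD
  have gap : (d * a + ∑ i ∈ Finset.range d, (2 * d + b - i)) * 8 + (4 * a * b + b ^ 2 + 2 * b) =
      4 * (2 * d + b) * (d + a) + (2 * d + b) ^ 2 + 2 * (2 * d + b) := by
    linarith
  rw [Nat.add_sub_cancel_left, Nat.le_div_iff_mul_le (by norm_num)]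
  exact (Nat.le_add_right _ _).trans_eq gap

end Exponent

section IsotropicTuples

variable {K V : Type*} [Field K] [AddCommGroup V] [Module K V]

/-- The `n`-tuples of pairwise `B`-orthogonal, `B`-isotropic vectors whose span, a totally isotropic
subspace, has dimension `d`. -/
def isotropicTuples (B : LinearMap.BilinForm K V) (n d : ℕ) : Set (Fin n → V) :=
  {f | (∀ i j, B (f i) (f j) = 0) ∧ finrank K (span K (Set.range f)) = d}

lemma span_range_fin_succ {n : ℕ} (f : Fin (n + 1) → V) :
    span K (Set.range f) = span K (Set.range (Fin.tail f)) ⊔ span K {f 0} := by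
  rw [Fin.range_fin_succ, span_insert, sup_comm]

lemma isotropicTuples_eq_empty_of_lt (B : LinearMap.BilinForm K V) {n d : ℕ} (h : n < d) :
    isotropicTuples B n d = ∅ := by
  refine Set.eq_empty_of_forall_notMem fun f ⟨_, hrank⟩ => h.not_ge ?_
  simpa only [← hrank, Set.finrank, Fintype.card_fin] using finrank_range_le_card (R := K) f

lemma ncard_isotropicTuples_zero_right_le_one [FiniteDimensional K V]
    (B : LinearMap.BilinForm K V) (n : ℕ) : (isotropicTuples B n 0).ncard ≤ 1 := by
  have hsub : isotropicTuples B n 0 ⊆ {0} := by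
    rintro f ⟨-, hrank⟩
    have hspan := finrank_eq_zero.1 hrank
    ext i
    simpa [hspan] using subset_span (R := K) (Set.mem_range_self (f := f) i)
  exact (Set.ncard_le_ncard hsub).trans_eq (Set.ncard_singleton 0)

variable {B : LinearMap.BilinForm K V}

lemma two_mul_le_finrank_of_mem_isotropicTuples [FiniteDimensional K V] (hB : B.Nondegenerate)
    {n d : ℕ} {f : Fin n → V} (hf : f ∈ isotropicTuples B n d) : 2 * d ≤ finrank K V := by
  obtain ⟨horth, rfl⟩ := hf
  refine two_mul_finrank_le_of_le_orthogonal hB (span_le.2 ?_)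
  rintro _ ⟨j, rfl⟩
  exact mem_orthogonal_span_iff.2 (Set.forall_mem_range.2 fun i => horth i j)

variable [Finite V]

lemma ncard_isotropicTuples_inter_mem_span_le (B : LinearMap.BilinForm K V) (n d : ℕ) :
    (isotropicTuples B (n + 1) d ∩ {f | f 0 ∈ span K (Set.range (Fin.tail f))}).ncard ≤
      Nat.card K ^ d * (isotropicTuples B n d).ncard := by
  refine ncard_le_mul_ncard_of_tail (fun g => span K (Set.range g)) ?_ (fun f hf => hf.2) ?_
  · rintro f ⟨⟨horth, hrank⟩, hmem⟩
    rw [span_range_fin_succ, sup_eq_left.2 ((span_singleton_le_iff_mem _ _).2 hmem)] at hrank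
    exact ⟨fun i j => horth i.succ j.succ, hrank⟩
  · rintro g ⟨-, rfl⟩
    exact natCard_eq_pow_finrank.le

lemma ncard_isotropicTuples_sdiff_mem_span_le (hB : B.Nondegenerate) (n d : ℕ) :
    (isotropicTuples B (n + 1) (d + 1) \ {f | f 0 ∈ span K (Set.range (Fin.tail f))}).ncard ≤
      Nat.card K ^ (finrank K V - d) * (isotropicTuples B n d).ncard := by
  refine ncard_le_mul_ncard_of_tail (fun g => B.orthogonal (span K (Set.range g))) ?_ ?_ ?_
  · rintro f ⟨⟨horth, hrank⟩, hmem⟩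
    rw [span_range_fin_succ, finrank_sup_span_singleton hmem] at hrank
    exact ⟨fun i j => horth i.succ j.succ, Nat.succ_injective hrank⟩
  · rintro f ⟨⟨horth, -⟩, -⟩
    exact mem_orthogonal_span_iff.2 (Set.forall_mem_range.2 fun i => horth i.succ 0)
  · rintro g ⟨-, rfl⟩
    rw [← LinearMap.BilinForm.finrank_orthogonal hB]
    exact natCard_eq_pow_finrank.le

lemma ncard_isotropicTuples_succ_succ_le (hB : B.Nondegenerate) (n d : ℕ) :
    (isotropicTuples B (n + 1) (d + 1)).ncard ≤
      Nat.card K ^ (d + 1) * (isotropicTuples B n (d + 1)).ncard +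
        Nat.card K ^ (finrank K V - d) * (isotropicTuples B n d).ncard := by
  rw [← Set.ncard_inter_add_ncard_sdiff_eq_ncard _ {f | f 0 ∈ span K (Set.range (Fin.tail f))}]
  exact add_le_add (ncard_isotropicTuples_inter_mem_span_le B n (d + 1))
    (ncard_isotropicTuples_sdiff_mem_span_le hB n d)

variable [Finite K]

lemma ncard_isotropicTuples_le (hB : B.Nondegenerate) (n d : ℕ) :
    (isotropicTuples B n d).ncard ≤
      n.choose d * Nat.card K ^ (d * (n - d) + ∑ i ∈ Finset.range d, (finrank K V - i)) := by
  induction n generalizing d with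
  | zero =>
    cases d with
    | zero => simpa using ncard_isotropicTuples_zero_right_le_one B 0
    | succ d => simp [isotropicTuples_eq_empty_of_lt B d.succ_pos]
  | succ n ih =>
    cases d with
    | zero => simpa using ncard_isotropicTuples_zero_right_le_one B (n + 1)
    | succ d =>
    set E := (d + 1) * (n - d) + ∑ i ∈ Finset.range (d + 1), (finrank K V - i) with hE
    have head_mem_span :
        Nat.card K ^ (d + 1) * (isotropicTuples B n (d + 1)).ncard ≤
          n.choose (d + 1) * Nat.card K ^ E := by
      rcases le_or_gt n d with hnd | hnd
      · simp [isotropicTuples_eq_empty_of_lt B (Nat.lt_succ_of_le hnd)]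
      · refine (Nat.mul_le_mul_left _ (ih (d + 1))).trans_eq ?_
        rw [mul_left_comm, ← pow_add, hE, ← add_assoc, ← mul_one_add,
          show 1 + (n - (d + 1)) = n - d by omega]
    have head_notMem_span :
        Nat.card K ^ (finrank K V - d) * (isotropicTuples B n d).ncard ≤
          n.choose d * Nat.card K ^ E := by
      refine (Nat.mul_le_mul_left _ (ih d)).trans ?_
      rw [mul_left_comm, ← pow_add]
      refine Nat.mul_le_mul_left _ (Nat.pow_le_pow_right Nat.card_pos ?_)
      rw [hE, Finset.sum_range_succ]
      linarith [Nat.mul_le_mul_right (n - d) d.le_succ]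
    calc (isotropicTuples B (n + 1) (d + 1)).ncard
      _ ≤ n.choose (d + 1) * Nat.card K ^ E + n.choose d * Nat.card K ^ E :=
        (ncard_isotropicTuples_succ_succ_le hB n d).trans <|
          add_le_add head_mem_span head_notMem_span
      _ = (n + 1).choose (d + 1) * Nat.card K ^ E := by rw [Nat.choose_succ_succ]; ring
      _ = _ := by rw [hE, Nat.add_sub_add_right]

lemma ncard_forall_bilin_eq_zero_le (hB : B.Nondegenerate) (n : ℕ) :
    {f : Fin n → V | ∀ i j, B (f i) (f j) = 0}.ncard ≤
      2 ^ n * Nat.card K ^ ((4 * finrank K V * n + finrank K V ^ 2 + 2 * finrank K V) / 8) := by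
  set E := (4 * finrank K V * n + finrank K V ^ 2 + 2 * finrank K V) / 8
  have ncard_le : ∀ d ∈ Finset.range (n + 1),
      (isotropicTuples B n d).ncard ≤ n.choose d * Nat.card K ^ E := by
    intro d hd
    rcases (isotropicTuples B n d).eq_empty_or_nonempty with hempty | ⟨f, hf⟩
    · simp [hempty]
    · refine (ncard_isotropicTuples_le hB n d).trans ?_
      gcongr
      · exact Nat.card_pos
      · exact isotropic_exponent_le (Finset.mem_range_succ_iff.1 hd)
          (two_mul_le_finrank_of_mem_isotropicTuples hB hf)
  have cover : {f : Fin n → V | ∀ i j, B (f i) (f j) = 0} ⊆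
      ⋃ d ∈ Finset.range (n + 1), isotropicTuples B n d := fun f hf =>
    Set.mem_biUnion (Finset.mem_range_succ_iff.2
      ((finrank_range_le_card f).trans_eq (Fintype.card_fin n))) ⟨hf, rfl⟩
  calc {f : Fin n → V | ∀ i j, B (f i) (f j) = 0}.ncard
    _ ≤ ∑ d ∈ Finset.range (n + 1), (isotropicTuples B n d).ncard :=
      (Set.ncard_le_ncard cover).trans (Finset.set_ncard_biUnion_le _ _)
    _ ≤ ∑ d ∈ Finset.range (n + 1), n.choose d * Nat.card K ^ E := Finset.sum_le_sum ncard_le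
    _ = 2 ^ n * Nat.card K ^ E := by rw [← Finset.sum_mul, Nat.sum_range_choose]

end IsotropicTuples

section EvenWeight

variable {ι : Type*} [Fintype ι]

lemma even_card_ne_zero_iff_dotProduct_self_eq_zero (v : ι → ZMod 2) :
    Even #{i | v i ≠ 0} ↔ v ⬝ᵥ v = 0 := by
  have mul_self (a : ZMod 2) : a * a = if a ≠ 0 then 1 else 0 := by decide +revert
  rw [dotProduct, Finset.sum_congr rfl fun i _ => mul_self (v i), Finset.sum_boole,
    ZMod.natCast_eq_zero_iff_even]

variable (ι) in
/-- The vertex set `V` of `G₀`, with an arbitrary finite set `ι` of coordinates. -/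
abbrev EvenWeightVector :=
  {v : ι → ZMod 2 // Even #{i | v i ≠ 0}}

lemma dotProduct_eq_zero_of_forall_ne_one {S : Finset (EvenWeightVector ι)}
    (hS : ∀ u ∈ S, ∀ w ∈ S, u ≠ w → u.1 ⬝ᵥ w.1 ≠ 1) : ∀ u ∈ S, ∀ w ∈ S, u.1 ⬝ᵥ w.1 = 0 := by
  intro u hu w hw
  rcases eq_or_ne u w with rfl | huw
  · exact (even_card_ne_zero_iff_dotProduct_self_eq_zero u.1).1 u.2
  · have eq_zero_of_ne_one (a : ZMod 2) : a ≠ 1 → a = 0 := by decide +revert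
    exact eq_zero_of_ne_one _ (hS u hu w hw huw)

lemma ncard_evenWeightVector_independent_le (n : ℕ) :
    {S : Finset (EvenWeightVector ι) |
        #S ≤ n ∧ ∀ u ∈ S, ∀ w ∈ S, u ≠ w → u.1 ⬝ᵥ w.1 ≠ 1}.ncard ≤
      2 ^ (n + (4 * Fintype.card ι * n + Fintype.card ι ^ 2 + 2 * Fintype.card ι) / 8) + 1 := by
  let B : LinearMap.BilinForm (ZMod 2) (ι → ZMod 2) := dotProductBilin (ZMod 2) (ZMod 2)
  have ncard_le_of_forget_evenWeight :
      {f : Fin n → EvenWeightVector ι | ∀ i j, B (f i).1 (f j).1 = 0}.ncard ≤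
        {f : Fin n → ι → ZMod 2 | ∀ i j, B (f i) (f j) = 0}.ncard :=
    Set.ncard_le_ncard_of_injOn (Subtype.val ∘ ·) (fun _ hf => hf)
      Subtype.val_injective.comp_left.injOn
  calc _
    _ ≤ {S : Finset (EvenWeightVector ι) | #S ≤ n ∧ ∀ u ∈ S, ∀ w ∈ S, B u.1 w.1 = 0}.ncard :=
      Set.ncard_le_ncard fun S hS => ⟨hS.1, dotProduct_eq_zero_of_forall_ne_one hS.2⟩
    _ ≤ {f : Fin n → EvenWeightVector ι | ∀ i j, B (f i).1 (f j).1 = 0}.ncard + 1 :=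
      ncard_finset_forall_rel_le (fun u w : EvenWeightVector ι => B u.1 w.1 = 0) n
    _ ≤ {f : Fin n → ι → ZMod 2 | ∀ i j, B (f i) (f j) = 0}.ncard + 1 :=
      Nat.add_le_add_right ncard_le_of_forget_evenWeight 1
    _ ≤ 2 ^ (n + (4 * Fintype.card ι * n + Fintype.card ι ^ 2 + 2 * Fintype.card ι) / 8) + 1 := by
      rw [pow_add]
      simpa [B] using ncard_forall_bilin_eq_zero_le (dotProductBilin_nondegenerate (ZMod 2) ι) n

end EvenWeight

lemma two_pow_add_one_le_two_rpow {ε : ℝ} (hε : 0 < ε) {t : ℕ} (ht : ⌈3 / ε⌉₊ + 1 ≤ t) :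
    ((2 ^ (t + (4 * t * t + t ^ 2 + 2 * t) / 8) + 1 : ℕ) : ℝ) ≤ 2 ^ ((5 / 8 + ε) * t ^ 2) := by
  have hone : (1 : ℝ) ≤ t := by exact_mod_cast (Nat.le_add_left 1 _).trans ht
  have hεt : 3 ≤ t * ε :=
    (div_le_iff₀ hε).1 ((Nat.le_ceil _).trans (by exact_mod_cast (Nat.le_succ _).trans ht))
  set E := (4 * t * t + t ^ 2 + 2 * t) / 8
  have hEle : (E : ℝ) ≤ (5 * t ^ 2 + 2 * t) / 8 := by
    refine Nat.cast_div_le.trans_eq ?_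
    push_cast
    ring
  calc ((2 ^ (t + E) + 1 : ℕ) : ℝ)
    _ ≤ ((2 ^ (t + E + 1) : ℕ) : ℝ) := by
      exact_mod_cast Nat.pow_lt_pow_right one_lt_two (Nat.lt_succ_self _)
    _ = 2 ^ ((t : ℝ) + E + 1) := by
      rw [← Nat.cast_add, ← Nat.cast_add_one, Real.rpow_natCast, Nat.cast_pow, Nat.cast_ofNat]
    _ ≤ 2 ^ ((5 / 8 + ε) * t ^ 2) := by
      refine Real.rpow_le_rpow_of_exponent_le one_le_two ?_
      linarith [mul_le_mul_of_nonneg_right hεt (zero_le_one.trans hone)]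

theorem count_independent_sets_general (ε : ℝ) (hε : 0 < ε) :
    ∃ t₀ : ℕ, ∀ t : ℕ, t₀ ≤ t →
      (Nat.card
          {S : Finset {v : Fin t → ZMod 2 //
              Even (Finset.univ.filter (fun i => v i ≠ 0)).card} //
            S.card ≤ t ∧
            ∀ u ∈ S, ∀ w ∈ S, u ≠ w →
              ∑ i, (u : Fin t → ZMod 2) i * (w : Fin t → ZMod 2) i ≠ 1} : ℝ)
        ≤ (2 : ℝ) ^ ((5 / 8 + ε) * t ^ 2) := by
  refine ⟨⌈3 / ε⌉₊ + 1, fun t ht => le_trans ?_ (two_pow_add_one_le_two_rpow hε ht)⟩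
  have hcount := ncard_evenWeightVector_independent_le (ι := Fin t) t
  rw [Fintype.card_fin] at hcount
  exact_mod_cast hcount

/-- For every `ε > 0` there is `t₀` such that for every even `t ≥ t₀`, the number of
independent sets of cardinality at most `t` in the graph `G₀` (on the even-weight vectors
of `𝔽₂^t`, distinct `u, v` adjacent iff `u ⬝ v = 1`) is at most `2^{(5/8 + ε) t²}`. -/
theorem count_independent_sets (ε : ℝ) (hε : 0 < ε) :
    ∃ t₀ : ℕ, ∀ t : ℕ, t₀ ≤ t → Even t →
      (Nat.card
          {S : Finset {v : Fin t → ZMod 2 //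
              Even (Finset.univ.filter (fun i => v i ≠ 0)).card} //
            S.card ≤ t ∧
            ∀ u ∈ S, ∀ w ∈ S, u ≠ w →
              ∑ i, (u : Fin t → ZMod 2) i * (w : Fin t → ZMod 2) i ≠ 1} : ℝ)
        ≤ (2 : ℝ) ^ ((5 / 8 + ε) * t ^ 2) :=
  (count_independent_sets_general ε hε).imp fun _ h t ht _ => h t ht
end
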